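/- arXiv:2211.14678 — 3 statements merged into one kernel-verified Lean document; each statement's English description precedes it below -/
import Mathlib

section
/- Let k = 2d with d ≥ 1 and π ∈ S_k with ν(π) > 2. If j = π(1) is free, then there exists τ ∈ S_k related to π by a single prefix reversal such that ν(π) − ν(τ) ≥ 1. -/
/-- `π` and `τ` are related by a prefix reversal: there is `t ≤ k` such that the first `t`
entries are reversed and the remaining entries agree (0-indexed form of the paper's
1-indexed definition). -/
def PrefixRev (k : ℕ) (π τ : Equiv.Perm (Fin k)) : Prop :=
  ∃ t : ℕ, ∃ ht : t ≤ k,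
    (∀ i : Fin k, t ≤ (i : ℕ) → π i = τ i) ∧
    (∀ i : Fin k, ∀ hi : (i : ℕ) < t, π i = τ ⟨t - 1 - (i : ℕ), by omega⟩)

/-- `π` and `τ` are related by a suffix reversal: there is `t` such that the entries at
positions `< t` agree and the remaining entries are reversed. -/
def SuffixRev (k : ℕ) (π τ : Equiv.Perm (Fin k)) : Prop :=
  ∃ t : ℕ,
    (∀ i : Fin k, (i : ℕ) < t → π i = τ i) ∧
    (∀ i : Fin k, ∀ hi : t ≤ (i : ℕ), π i = τ ⟨k - 1 - (i : ℕ) + t, by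
      have := i.isLt; omega⟩)

/-- The pancake graph `P_k`, whose edges are prefix reversals. -/
def pancakeGraph (k : ℕ) : SimpleGraph (Equiv.Perm (Fin k)) :=
  SimpleGraph.fromRel (PrefixRev k)

/-- The graph `G_k`, whose edges are prefix and suffix reversals. -/
def prefixSuffixGraph (k : ℕ) : SimpleGraph (Equiv.Perm (Fin k)) :=
  SimpleGraph.fromRel (fun π τ => PrefixRev k π τ ∨ SuffixRev k π τ)

/-- The values of `π` at positions `p` and `q` differ by `1`, or are `{1, k}`
(1-indexed), i.e. `{0, k - 1}` in this 0-indexed formalization. -/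
def PiAdjacency (k : ℕ) (π : Equiv.Perm (Fin k)) (p q : Fin k) : Prop :=
  (((π p : ℕ) : ℤ) - ((π q : ℕ) : ℤ)).natAbs = 1 ∨
    ({(π p : ℕ), (π q : ℕ)} : Set ℕ) = {0, k - 1}

/-- Positions `i` and `i + 1` (0-indexed) form a `π`-adjacency. -/
def PosAdjacency (k : ℕ) (π : Equiv.Perm (Fin k)) (i : ℕ) : Prop :=
  ∃ h : i + 1 < k, PiAdjacency k π ⟨i, by omega⟩ ⟨i + 1, h⟩

/-- The equivalence relation `∼_π`: `a ∼_π b` iff every pair of consecutive positions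
between the position of `a` and the position of `b` is a `π`-adjacency. -/
def Sim (k : ℕ) (π : Equiv.Perm (Fin k)) (a b : Fin k) : Prop :=
  ∀ i : ℕ, min ((π.symm a : ℕ)) ((π.symm b : ℕ)) ≤ i →
    i < max ((π.symm a : ℕ)) ((π.symm b : ℕ)) → PosAdjacency k π i

/-- `∼_π` has exactly one equivalence class on `[k]`. -/
def OneClass (k : ℕ) (π : Equiv.Perm (Fin k)) : Prop :=
  ∀ a b : Fin k, Sim k π a b

/-- The pairing `φ(j) = j + o_j`, swapping `2i - 1 ↔ 2i` (1-indexed),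
i.e. `2i ↔ 2i + 1` (0-indexed). -/
def partner (d : ℕ) (j : Fin (2 * d)) : Fin (2 * d) :=
  ⟨if (j : ℕ) % 2 = 0 then (j : ℕ) + 1 else (j : ℕ) - 1, by
    have := j.isLt; split <;> omega⟩

/-- The equivalence relation `≈_π`. -/
def ApproxSim (d : ℕ) (π : Equiv.Perm (Fin (2 * d))) (a b : Fin (2 * d)) : Prop :=
  a = b ∨ (Sim (2 * d) π a b ∧ Sim (2 * d) π a (partner d a) ∧
    Sim (2 * d) π b (partner d b))

/-- `j` is free, i.e. `{j}` is an equivalence class (a singleton) of `≈_π`. -/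
def IsFree (d : ℕ) (π : Equiv.Perm (Fin (2 * d))) (j : Fin (2 * d)) : Prop :=
  ∀ j' : Fin (2 * d), ApproxSim d π j j' → j' = j

/-- The `≈_π`-equivalence class of `j`, as a finite set. -/
noncomputable def classOf (d : ℕ) (π : Equiv.Perm (Fin (2 * d))) (j : Fin (2 * d)) :
    Finset (Fin (2 * d)) :=
  @Finset.filter _ (fun j' => ApproxSim d π j j') (Classical.decPred _) Finset.univ

/-- `S(π)`, the number of singletons of `π`. -/
noncomputable def numSingletons (d : ℕ) (π : Equiv.Perm (Fin (2 * d))) : ℕ :=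
  (@Finset.filter _ (fun j => IsFree d π j) (Classical.decPred _) Finset.univ).card

/-- `B(π)`, the number of blocks (equivalence classes of `≈_π` of size `> 1`) of `π`. -/
noncomputable def numBlocks (d : ℕ) (π : Equiv.Perm (Fin (2 * d))) : ℕ :=
  ((Finset.univ.image (classOf d π)).filter (fun C => 1 < C.card)).card

/-- The potential function `ν(π) = (3/2) S(π) + 2 B(π)`. -/
noncomputable def nu (d : ℕ) (π : Equiv.Perm (Fin (2 * d))) : ℚ :=
  3 / 2 * (numSingletons d π : ℚ) + 2 * (numBlocks d π : ℚ)

/-- The unique element of `[k]` congruent to `j - o_j` modulo `k` (0-indexed form). -/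
def prevVal (d : ℕ) (j : Fin (2 * d)) : Fin (2 * d) :=
  ⟨if (j : ℕ) % 2 = 0 then ((j : ℕ) + 2 * d - 1) % (2 * d) else ((j : ℕ) + 1) % (2 * d), by
    have := j.isLt; split <;> exact Nat.mod_lt _ (by omega)⟩

theorem partner_val (d : ℕ) (a : Fin (2 * d)) : (partner d a : ℕ) =
    if (a : ℕ) % 2 = 0 then (a : ℕ) + 1 else (a : ℕ) - 1 := rfl

theorem partner_partner (d : ℕ) (a : Fin (2 * d)) : partner d (partner d a) = a := by
  apply Fin.ext
  rw [partner_val, partner_val]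
  split_ifs <;> omega

theorem partner_ne (d : ℕ) (a : Fin (2 * d)) : partner d a ≠ a := by
  intro h
  have h := congrArg Fin.val h
  rw [partner_val] at h
  split_ifs at h <;> omega

/-- cyclic neighbours -/
def Nb (k a b : ℕ) : Prop :=
  a + 1 = b ∨ b + 1 = a ∨ (a = 0 ∧ b = k - 1) ∨ (b = 0 ∧ a = k - 1)

theorem piAdj_iff (k : ℕ) (π : Equiv.Perm (Fin k)) (p q : Fin k) :
    PiAdjacency k π p q ↔ Nb k (π p) (π q) := by
  unfold PiAdjacency Nb
  rw [Set.pair_eq_pair_iff]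
  omega

theorem posAdj_iff (k : ℕ) (π : Equiv.Perm (Fin k)) (i : ℕ) :
    PosAdjacency k π i ↔ ∃ h : i + 1 < k, Nb k (π ⟨i, by omega⟩) (π ⟨i + 1, h⟩) := by
  unfold PosAdjacency
  simp only [piAdj_iff]

theorem Nb.symm {k a b : ℕ} (h : Nb k a b) : Nb k b a := by
  unfold Nb at *; omega

theorem nb_partner (d : ℕ) (a : Fin (2 * d)) : Nb (2 * d) a (partner d a) := by
  rw [partner_val]
  unfold Nb
  split_ifs <;> omega

theorem Sim.symm' {k : ℕ} {π : Equiv.Perm (Fin k)} {a b : Fin k} (h : Sim k π a b) :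
    Sim k π b a := by
  intro i h1 h2
  exact h i (by omega) (by omega)

theorem Sim.trans' {k : ℕ} {π : Equiv.Perm (Fin k)} {a b c : Fin k} (h : Sim k π a b)
    (h' : Sim k π b c) : Sim k π a c := by
  intro i h1 h2
  by_cases hh : min ((π.symm a : ℕ)) ((π.symm b : ℕ)) ≤ i ∧
    i < max ((π.symm a : ℕ)) ((π.symm b : ℕ))
  · exact h i hh.1 hh.2
  · exact h' i (by omega) (by omega)

theorem sim_self (k : ℕ) (π : Equiv.Perm (Fin k)) (a : Fin k) : Sim k π a a := by
  intro i h1 h2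
  omega

theorem isFree_iff (d : ℕ) (π : Equiv.Perm (Fin (2 * d))) (a : Fin (2 * d)) :
    IsFree d π a ↔ ¬ Sim (2 * d) π a (partner d a) := by
  constructor
  · intro h hs
    refine partner_ne d a (h _ (Or.inr ⟨hs, hs, ?_⟩))
    rw [partner_partner]
    exact hs.symm'
  · rintro h b (hb | hb)
    · exact hb.symm
    · exact absurd hb.2.1 h

theorem mem_classOf (d : ℕ) (π : Equiv.Perm (Fin (2 * d))) (a b : Fin (2 * d)) :
    b ∈ classOf d π a ↔ ApproxSim d π a b := by
  unfold classOf
  simp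

theorem classOf_eq (d : ℕ) (π : Equiv.Perm (Fin (2 * d))) {a b : Fin (2 * d)}
    (h : Sim (2 * d) π a b) (ha : Sim (2 * d) π a (partner d a))
    (hb : Sim (2 * d) π b (partner d b)) : classOf d π a = classOf d π b := by
  ext c
  rw [mem_classOf, mem_classOf]
  constructor
  · rintro (rfl | hc)
    · exact Or.inr ⟨h.symm', hb, ha⟩
    · exact Or.inr ⟨h.symm'.trans' hc.1, hb, hc.2.2⟩
  · rintro (rfl | hc)
    · exact Or.inr ⟨h, ha, hb⟩
    · exact Or.inr ⟨h.trans' hc.1, ha, hc.2.2⟩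

/-- Abstract counting. -/
theorem nu_drop (d : ℕ) (π τ : Equiv.Perm (Fin (2 * d))) (j : Fin (2 * d))
    (hj : ¬ Sim (2 * d) π j (partner d j)) (hj' : Sim (2 * d) τ j (partner d j))
    (h1 : ∀ a b, Sim (2 * d) π a (partner d a) → Sim (2 * d) π b (partner d b) →
      Sim (2 * d) π a b → Sim (2 * d) τ a b)
    (h2 : ∀ a, ¬ Sim (2 * d) π a (partner d a) → Sim (2 * d) τ a (partner d a) →
      Sim (2 * d) τ a j) : 1 ≤ nu d π - nu d τ := by
  classical
  have hpp : ∀ (σ : Equiv.Perm (Fin (2 * d))) a, Sim (2 * d) σ a (partner d a) →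
      Sim (2 * d) σ (partner d a) (partner d (partner d a)) := by
    intro σ a h
    rw [partner_partner]
    exact h.symm'
  have h3 : ∀ a, Sim (2 * d) π a (partner d a) → Sim (2 * d) τ a (partner d a) :=
    fun a h => h1 a _ h (hpp π a h) h
  have hS : numSingletons d τ + 2 ≤ numSingletons d π := by
    unfold numSingletons
    have h2c := Finset.card_pair (partner_ne d j).symm
    refine le_trans (le_of_eq ((congrArg (_ + ·) h2c.symm).trans
      (Finset.card_union_of_disjoint ?_).symm)) ?_
    rotate_left
    · apply Finset.card_le_card
      intro a ha
      simp only [Finset.mem_union, Finset.mem_filter, Finset.mem_univ, true_and,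
        Finset.mem_insert, Finset.mem_singleton, isFree_iff] at ha ⊢
      rcases ha with ha | rfl | rfl
      · exact fun h => ha (h3 a h)
      · exact hj
      · intro h
        rw [partner_partner] at h
        exact hj h.symm'
    · rw [Finset.disjoint_right]
      intro a ha
      simp only [Finset.mem_filter, Finset.mem_univ, true_and,
        Finset.mem_insert, Finset.mem_singleton, isFree_iff, not_not] at ha ⊢
      rcases ha with rfl | rfl
      · exact hj'
      · exact hpp _ _ hj'
  have hB : numBlocks d τ ≤ numBlocks d π + 1 := by
    unfold numBlocks
    set g : Finset (Fin (2 * d)) → Finset (Fin (2 * d)) := fun C =>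
      if h : C.Nonempty then classOf d τ h.choose else ∅ with hg
    refine le_trans (Finset.card_le_card (t := insert (classOf d τ j)
      (((Finset.univ.image (classOf d π)).filter (fun C => 1 < C.card)).image g)) ?_)
      (le_trans (Finset.card_insert_le _ _) (Nat.add_le_add_right Finset.card_image_le 1))
    intro C hC
    simp only [Finset.mem_filter, Finset.mem_image, Finset.mem_univ, true_and] at hC
    obtain ⟨⟨a, rfl⟩, hc⟩ := hC
    have haτ : Sim (2 * d) τ a (partner d a) := by
      obtain ⟨x, hx, hxa⟩ := Finset.exists_mem_ne hc a
      rw [mem_classOf] at hx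
      rcases hx with hx | hx
      · exact absurd hx.symm hxa
      · exact hx.2.1
    rw [Finset.mem_insert]
    by_cases ha : Sim (2 * d) π a (partner d a)
    · right
      have hne : (classOf d π a).Nonempty := ⟨a, (mem_classOf _ _ _ _).2 (Or.inl rfl)⟩
      refine Finset.mem_image.2 ⟨classOf d π a, ?_, ?_⟩
      · refine Finset.mem_filter.2 ⟨Finset.mem_image_of_mem _ (Finset.mem_univ _), ?_⟩
        refine Finset.one_lt_card.2 ⟨a, (mem_classOf _ _ _ _).2 (Or.inl rfl), partner d a,
          (mem_classOf _ _ _ _).2 (Or.inr ⟨ha, ha, hpp _ _ ha⟩), (partner_ne d a).symm⟩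
      · rw [hg]
        simp only [hne, dif_pos]
        have hb := hne.choose_spec
        rw [mem_classOf] at hb
        rcases hb with hb | hb
        · rw [← hb]
        · exact (classOf_eq d τ (h1 _ _ ha hb.2.2 hb.1) haτ (h3 _ hb.2.2)).symm
    · left
      exact classOf_eq d τ (h2 a ha haτ) haτ hj'
  unfold nu
  have hS' : (numSingletons d τ : ℚ) + 2 ≤ numSingletons d π := by exact_mod_cast hS
  have hB' : (numBlocks d τ : ℚ) ≤ numBlocks d π + 1 := by exact_mod_cast hB
  linarith

/-- reversal of the first `p` positions -/
def revFun (k p : ℕ) (hpk : p ≤ k) (i : Fin k) : Fin k :=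
  ⟨if (i : ℕ) < p then p - 1 - (i : ℕ) else i, by split_ifs <;> omega⟩

theorem revFun_invol (k p : ℕ) (hpk : p ≤ k) : Function.Involutive (revFun k p hpk) := by
  intro i
  apply Fin.ext
  simp only [revFun]
  split_ifs <;> omega

/-- reversal of the first `p` positions, as a permutation -/
def revPerm (k p : ℕ) (hpk : p ≤ k) : Equiv.Perm (Fin k) := (revFun_invol k p hpk).toPerm

theorem rev_lt (k p : ℕ) (hpk : p ≤ k) (i : ℕ) (h : i < k) (hp : i < p) :
    revPerm k p hpk ⟨i, h⟩ = ⟨p - 1 - i, by omega⟩ := by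
  apply Fin.ext
  change (if i < p then p - 1 - i else i) = _
  simp [hp]

theorem rev_ge (k p : ℕ) (hpk : p ≤ k) (i : ℕ) (h : i < k) (hp : p ≤ i) :
    revPerm k p hpk ⟨i, h⟩ = ⟨i, h⟩ := by
  apply Fin.ext
  change (if i < p then p - 1 - i else i) = _
  rw [if_neg (by omega)]

theorem posAdj_ge (k p : ℕ) (hpk : p ≤ k) (π : Equiv.Perm (Fin k)) (i : ℕ) (hp : p ≤ i) :
    PosAdjacency k ((revPerm k p hpk).trans π) i ↔ PosAdjacency k π i := by
  rw [posAdj_iff, posAdj_iff]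
  refine exists_congr fun h => ?_
  rw [Equiv.trans_apply, Equiv.trans_apply, rev_ge _ _ _ _ _ hp, rev_ge _ _ _ _ _ (by omega)]

theorem posAdj_lt (k p : ℕ) (hpk : p ≤ k) (π : Equiv.Perm (Fin k)) (i i' : ℕ)
    (hp : i + i' + 2 = p) :
    PosAdjacency k ((revPerm k p hpk).trans π) i ↔ PosAdjacency k π i' := by
  rw [posAdj_iff, posAdj_iff]
  have e1 : revPerm k p hpk ⟨i, by omega⟩ = ⟨i' + 1, by omega⟩ := by
    rw [rev_lt _ _ _ _ _ (by omega)]; apply Fin.ext; simp only; omega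
  have e2 : revPerm k p hpk ⟨i + 1, by omega⟩ = ⟨i', by omega⟩ := by
    rw [rev_lt _ _ _ _ _ (by omega)]; apply Fin.ext; simp only; omega
  constructor
  · rintro ⟨h, hh⟩
    rw [Equiv.trans_apply, Equiv.trans_apply, e1, e2] at hh
    exact ⟨by omega, hh.symm⟩
  · rintro ⟨h, hh⟩
    refine ⟨by omega, ?_⟩
    rw [Equiv.trans_apply, Equiv.trans_apply, e1, e2]
    exact hh.symm

theorem symm_val (k p : ℕ) (hpk : p ≤ k) (π : Equiv.Perm (Fin k)) (a : Fin k) :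
    ((((revPerm k p hpk).trans π).symm a : Fin k) : ℕ) =
      if (π.symm a : ℕ) < p then p - 1 - (π.symm a : ℕ) else (π.symm a : ℕ) := rfl

/-- Let `k = 2d`, `d ≥ 1`, and `π ∈ S_k` with `ν(π) > 2`. If
`j = π(1)` is free, then there is `τ` related to `π` by a single prefix reversal with
`ν(π) - ν(τ) ≥ 1`. -/
theorem statement_11 (d : ℕ) (hd : 1 ≤ d) (π : Equiv.Perm (Fin (2 * d)))
    (hν : 2 < nu d π) (hfree : IsFree d π (π ⟨0, by omega⟩)) :
    ∃ τ : Equiv.Perm (Fin (2 * d)), PrefixRev (2 * d) π τ ∧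
      1 ≤ nu d π - nu d τ := by
  have hk : 0 < 2 * d := by omega
  obtain ⟨j, hj0⟩ : ∃ j, j = π ⟨0, hk⟩ := ⟨_, rfl⟩
  rw [← hj0, isFree_iff] at hfree
  have hjs : π.symm j = ⟨0, hk⟩ := by rw [hj0]; simp
  obtain ⟨q, hq⟩ : ∃ q, q = π.symm (partner d j) := ⟨_, rfl⟩
  have hπq : π q = partner d j := by rw [hq]; simp
  obtain ⟨p, hp⟩ : ∃ p, p = (q : ℕ) := ⟨_, rfl⟩
  have hpk : p < 2 * d := by rw [hp]; exact q.isLt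
  have hqp : q = ⟨p, hpk⟩ := Fin.ext hp.symm
  have hπp : π ⟨p, hpk⟩ = partner d j := by rw [← hqp]; exact hπq
  have hp0 : 0 < p := by
    rcases Nat.eq_zero_or_pos p with h | h
    · exfalso
      subst h
      rw [← hj0] at hπp
      exact partner_ne d j hπp.symm
    · exact h
  have hp1 : p ≠ 1 := by
    intro h
    apply hfree
    intro i hi1 hi2
    rw [hjs, ← hq, ← hp] at hi1 hi2
    simp only at hi1 hi2
    have : i = 0 := by omega
    subst this
    subst h
    rw [posAdj_iff]
    refine ⟨hpk, ?_⟩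
    simp only [Nat.zero_add]
    rw [hπp, ← hj0]
    exact nb_partner d j
  have hnot : PosAdjacency (2 * d) π (p - 1) → PosAdjacency (2 * d) π p → False := by
    rw [posAdj_iff, posAdj_iff]
    rintro ⟨h1, n1⟩ ⟨h2, n2⟩
    have e : (⟨p - 1 + 1, h1⟩ : Fin (2 * d)) = ⟨p, hpk⟩ := Fin.ext (by simp only; omega)
    rw [e] at n1
    have n3 : Nb (2 * d) (π ⟨0, hk⟩) (π ⟨p, hpk⟩) := by
      rw [hπp, ← hj0]; exact nb_partner d j
    have d1 : (π ⟨0, hk⟩ : ℕ) ≠ π ⟨p - 1, by omega⟩ := fun h => by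
      have := congrArg Fin.val (π.injective (Fin.ext h)); simp only at this; omega
    have d2 : (π ⟨0, hk⟩ : ℕ) ≠ π ⟨p + 1, h2⟩ := fun h => by
      have := congrArg Fin.val (π.injective (Fin.ext h)); simp only at this; omega
    have d3 : (π ⟨p - 1, by omega⟩ : ℕ) ≠ π ⟨p + 1, h2⟩ := fun h => by
      have := congrArg Fin.val (π.injective (Fin.ext h)); simp only at this; omega
    have l0 := (π ⟨0, hk⟩).isLt
    have l1 := (π ⟨p, hpk⟩).isLt
    have l2 := (π ⟨p - 1, by omega⟩).isLt
    have l3 := (π ⟨p + 1, h2⟩).isLt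
    unfold Nb at n1 n2 n3
    omega
  have hnewadj : PosAdjacency (2 * d) ((revPerm (2 * d) p hpk.le).trans π) (p - 1) := by
    rw [posAdj_iff]
    refine ⟨by omega, ?_⟩
    have e : (⟨p - 1 + 1, by omega⟩ : Fin (2 * d)) = ⟨p, hpk⟩ := Fin.ext (by simp only; omega)
    have e1 : revPerm (2 * d) p hpk.le ⟨p - 1, by omega⟩ = ⟨0, hk⟩ := by
      rw [rev_lt _ _ _ _ _ (by omega)]; apply Fin.ext; simp only; omega
    rw [e, Equiv.trans_apply, Equiv.trans_apply, e1, rev_ge _ _ _ _ _ le_rfl, hπp, ← hj0]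
    exact nb_partner d j
  -- one-sided version of the preservation statement
  have key : ∀ a b, Sim (2 * d) π b (partner d b) → Sim (2 * d) π a b →
      (π.symm a : ℕ) ≤ (π.symm b : ℕ) →
      Sim (2 * d) ((revPerm (2 * d) p hpk.le).trans π) a b := by
    intro a b hb hab hle i hi1 hi2
    rw [symm_val, symm_val] at hi1 hi2
    by_cases hbp : (π.symm b : ℕ) < p
    · rw [if_pos hbp, if_pos (by omega)] at hi1 hi2
      rw [posAdj_lt _ _ hpk.le π i (p - 2 - i) (by omega)]
      exact hab _ (by omega) (by omega)
    · by_cases hap : (π.symm a : ℕ) < p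
      · exfalso
        have hbne : (π.symm b : ℕ) ≠ p := by
          intro h
          have : π.symm b = π.symm (partner d j) := by
            rw [← hq, hqp]; exact Fin.ext h
          have := π.symm.injective this
          subst this
          rw [partner_partner] at hb
          exact hfree hb.symm'
        exact hnot (hab _ (by omega) (by omega)) (hab _ (by omega) (by omega))
      · rw [if_neg hap, if_neg hbp] at hi1 hi2
        rw [posAdj_ge _ _ hpk.le _ _ (by omega)]
        exact hab _ (by omega) (by omega)
  -- a new similarity must pass through the new adjacency
  have key2 : ∀ a b, (π.symm a : ℕ) < p ∧ (π.symm b : ℕ) < p ∨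
      p ≤ (π.symm a : ℕ) ∧ p ≤ (π.symm b : ℕ) →
      Sim (2 * d) ((revPerm (2 * d) p hpk.le).trans π) a b → Sim (2 * d) π a b := by
    intro a b h hs i hi1 hi2
    unfold Sim at hs
    rw [symm_val, symm_val] at hs
    rcases h with ⟨ha, hb⟩ | ⟨ha, hb⟩
    · rw [if_pos ha, if_pos hb] at hs
      rw [← posAdj_lt _ _ hpk.le π (p - 2 - i) i (by omega)]
      exact hs _ (by omega) (by omega)
    · rw [if_neg (by omega), if_neg (by omega)] at hs
      rw [← posAdj_ge _ p hpk.le _ _ (by omega)]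
      exact hs _ (by omega) (by omega)
  have hjτ : ((((revPerm (2 * d) p hpk.le).trans π).symm j : Fin (2 * d)) : ℕ) = p - 1 := by
    rw [symm_val, hjs]
    simp [hp0]
  refine ⟨(revPerm (2 * d) p hpk.le).trans π, ⟨p, hpk.le, ?_, ?_⟩,
    nu_drop d π _ j hfree ?_ ?_ ?_⟩
  · rintro ⟨i, hi⟩ h
    rw [Equiv.trans_apply, rev_ge _ _ _ _ _ h]
  · rintro ⟨i, hi⟩ h
    simp only at h
    rw [Equiv.trans_apply, rev_lt _ _ _ _ _ (by simp only; omega)]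
    congr 1
    apply Fin.ext
    simp only
    omega
  · intro i hi1 hi2
    rw [hjτ, symm_val, ← hq, ← hp, if_neg (by omega)] at hi1 hi2
    have : i = p - 1 := by omega
    rw [this]
    exact hnewadj
  · intro a b ha hb hab
    rcases le_total (π.symm a : ℕ) (π.symm b : ℕ) with h | h
    · exact key a b hb hab h
    · exact (key b a ha hab.symm' h).symm'
  · intro a ha hs i hi1 hi2
    rw [hjτ, symm_val] at hi1 hi2
    have hcross : ¬ ((π.symm a : ℕ) < p ∧ (π.symm (partner d a) : ℕ) < p ∨
      p ≤ (π.symm a : ℕ) ∧ p ≤ (π.symm (partner d a) : ℕ)) :=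
      fun h => ha (key2 _ _ h hs)
    unfold Sim at hs
    rw [symm_val, symm_val] at hs
    by_cases h : (π.symm a : ℕ) < p
    · rw [if_pos h] at hi1 hi2 hs
      rw [if_neg (by omega)] at hs
      exact hs _ (by omega) (by omega)
    · rw [if_neg h] at hi1 hi2 hs
      rw [if_pos (by omega)] at hs
      exact hs _ (by omega) (by omega)
end

section
/- Let k ≥ 1 and σ ∈ S_k. If the equivalence relation ∼_σ has exactly one equivalence class on [k], then there exists t ∈ [k] such that either (i) σ(i) = t + 1 − i for all i ∈ [t] and σ(i) = k + t + 1 − i for all i with t < i ≤ k (i.e., σ = t, t−1, ..., 1, k, k−1, ..., t+1), or (ii) σ(i) = t + i for all i ∈ [k − t] and σ(i) = i − (k − t) for all i with k − t < i ≤ k (i.e., σ = t+1, t+2, ..., k, 1, 2, ..., t). -/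
theorem aux15 (k : ℕ) (hk : 1 ≤ k) (f : ℕ → ℕ) (hlt : ∀ i, i < k → f i < k)
    (hinj : ∀ i, i + 2 < k → f i ≠ f (i + 2))
    (hadj : ∀ i, i + 1 < k →
      ((f (i + 1) = f i + 1 ∨ (f i = k - 1 ∧ f (i + 1) = 0)) ∨
       (f i = f (i + 1) + 1 ∨ (f i = 0 ∧ f (i + 1) = k - 1)))) :
    ∃ t : ℕ, 1 ≤ t ∧ t ≤ k ∧
      (((∀ i, i < k → i < t → f i = t - 1 - i) ∧
        (∀ i, i < k → t ≤ i → f i = k + t - 1 - i)) ∨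
       ((∀ i, i < k → i < k - t → f i = t + i) ∧
        (∀ i, i < k → k - t ≤ i → f i = i - (k - t)))) := by
  have h0 := hlt 0 (by omega)
  have hdir : (∀ i, i + 1 < k → (f (i + 1) = f i + 1 ∨ (f i = k - 1 ∧ f (i + 1) = 0))) ∨
      (∀ i, i + 1 < k → (f i = f (i + 1) + 1 ∨ (f i = 0 ∧ f (i + 1) = k - 1))) := by
    by_cases h1 : 0 + 1 < k
    · rcases hadj 0 h1 with h | h
      · left
        intro i
        induction i with
        | zero => intro _; exact h
        | succ i ih =>
          intro hi
          have a := ih (by omega)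
          have b := hadj (i + 1) hi
          have c := hinj i (by omega)
          have d := hlt i (by omega)
          have e := hlt (i + 1) (by omega)
          have g := hlt (i + 1 + 1) (by omega)
          simp only [show i + 2 = i + 1 + 1 from rfl] at c
          omega
      · right
        intro i
        induction i with
        | zero => intro _; exact h
        | succ i ih =>
          intro hi
          have a := ih (by omega)
          have b := hadj (i + 1) hi
          have c := hinj i (by omega)
          have d := hlt i (by omega)
          have e := hlt (i + 1) (by omega)
          have g := hlt (i + 1 + 1) (by omega)
          simp only [show i + 2 = i + 1 + 1 from rfl] at c
          omega
    · left
      intro i hi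
      omega
  rcases hdir with h | h
  · have key : ∀ i, i < k → (i < k - f 0 → f i = f 0 + i) ∧
        (k - f 0 ≤ i → f i = i - (k - f 0)) := by
      intro i
      induction i with
      | zero => intro _; omega
      | succ i ih =>
        intro hi
        have a := ih (by omega)
        have b := h i hi
        have e := hlt (i + 1) (by omega)
        omega
    by_cases hz : f 0 = 0
    · refine ⟨k, hk, le_rfl, Or.inr ⟨?_, ?_⟩⟩ <;> intro i hi hi2 <;> have := key i hi <;> omega
    · refine ⟨f 0, by omega, by omega, Or.inr ⟨?_, ?_⟩⟩ <;> intro i hi hi2 <;>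
        have := key i hi <;> omega
  · have key : ∀ i, i < k → (i < f 0 + 1 → f i = f 0 - i) ∧
        (f 0 + 1 ≤ i → f i = k + f 0 - i) := by
      intro i
      induction i with
      | zero => intro _; omega
      | succ i ih =>
        intro hi
        have a := ih (by omega)
        have b := h i hi
        have e := hlt (i + 1) (by omega)
        omega
    refine ⟨f 0 + 1, by omega, by omega, Or.inl ⟨?_, ?_⟩⟩ <;> intro i hi hi2 <;>
      have := key i hi <;> omega

theorem pair15 {a b c d : ℕ} (h : ({a, b} : Set ℕ) = {c, d}) :
    (a = c ∧ b = d) ∨ (a = d ∧ b = c) := by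
  have := Set.pair_eq_pair_iff.1 h
  exact this

/-- Let `k ≥ 1` and `σ ∈ S_k`. If `∼_σ` has exactly one equivalence
class, then there is `t ∈ [k]` with either
`σ = t, t-1, …, 1, k, k-1, …, t+1` or `σ = t+1, t+2, …, k, 1, 2, …, t`
(stated 0-indexed: values and positions are shifted down by one). -/
theorem statement_15 (k : ℕ) (hk : 1 ≤ k) (σ : Equiv.Perm (Fin k))
    (hone : OneClass k σ) :
    ∃ t : ℕ, 1 ≤ t ∧ t ≤ k ∧
      (((∀ i : Fin k, (i : ℕ) < t → (σ i : ℕ) = t - 1 - (i : ℕ)) ∧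
        (∀ i : Fin k, t ≤ (i : ℕ) → (σ i : ℕ) = k + t - 1 - (i : ℕ))) ∨
       ((∀ i : Fin k, (i : ℕ) < k - t → (σ i : ℕ) = t + (i : ℕ)) ∧
        (∀ i : Fin k, k - t ≤ (i : ℕ) → (σ i : ℕ) = (i : ℕ) - (k - t)))) := by
  have key := aux15 k hk (fun i => if h : i < k then (σ ⟨i, h⟩ : ℕ) else 0)
    (by intro i hi; simp [hi])
    (by
      intro i hi heq
      have h1 : i < k := by omega
      simp only [h1, hi, dif_pos] at heq
      have := congrArg Fin.val (σ.injective (Fin.ext heq))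
      simp at this)
    (by
      intro i hi
      have h1 : i < k := by omega
      simp only [h1, hi, dif_pos]
      obtain ⟨_, h⟩ := hone (σ ⟨i, h1⟩) (σ ⟨i + 1, hi⟩) i (by simp) (by simp)
      rcases h with h | h
      · omega
      · have := pair15 h
        omega)
  obtain ⟨t, ht1, ht2, h⟩ := key
  refine ⟨t, ht1, ht2, ?_⟩
  rcases h with ⟨h1, h2⟩ | ⟨h1, h2⟩
  · left
    constructor
    · intro i hi
      simpa using h1 i i.isLt hi
    · intro i hi
      simpa using h2 i i.isLt hi
  · right
    constructor
    · intro i hi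
      simpa using h1 i i.isLt hi
    · intro i hi
      simpa using h2 i i.isLt hi
end

section
/- Let k ≥ 1. For π ∈ S_{k+1}, let ψ(π) ∈ S_k be the permutation whose sequence of values (ψ(π)(1), ..., ψ(π)(k)) is obtained from (π(1), ..., π(k+1)) by deleting the entry equal to k+1. If π, τ ∈ S_{k+1} are adjacent in G_{k+1}, then either ψ(π) = ψ(τ) or ψ(π) and ψ(τ) are adjacent in G_k. Consequently, d_{G_k}(ψ(π), ψ(τ)) ≤ d_{G_{k+1}}(π, τ) for all π, τ ∈ S_{k+1}. -/
/-- `π' ∈ S_k` is obtained from `π ∈ S_{k+1}` by deleting the entry equal to `k + 1`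
(the entry equal to `k` in this 0-indexed formalization) from its sequence of values. -/
def DeleteTop (k : ℕ) (π : Equiv.Perm (Fin (k + 1))) (π' : Equiv.Perm (Fin k)) : Prop :=
  (((List.finRange (k + 1)).map (fun i => (π i : ℕ))).filter (fun v => v != k)) =
    (List.finRange k).map (fun i => (π' i : ℕ))

theorem aux_filter (k : ℕ) (p : Fin (k + 1)) :
    (List.finRange (k + 1)).filter (fun i => decide (i ≠ p)) =
      (List.finRange k).map p.succAbove := by
  have h1 : ((List.finRange (k + 1)).filter (fun i => decide (i ≠ p))).Pairwise (· < ·) :=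
    (List.pairwise_lt_finRange (k + 1)).filter _
  have h2 : ((List.finRange k).map p.succAbove).Pairwise (· < ·) := by
    rw [List.pairwise_map]
    exact (List.pairwise_lt_finRange k).imp (fun h => Fin.strictMono_succAbove p h)
  have hp : ((List.finRange (k + 1)).filter (fun i => decide (i ≠ p))).Perm
      ((List.finRange k).map p.succAbove) := by
    rw [List.perm_ext_iff_of_nodup (h1.imp (fun h => ne_of_lt h)) (h2.imp (fun h => ne_of_lt h))]
    intro a
    simp [Fin.exists_succAbove_eq_iff]
  exact hp.eq_of_pairwise (fun a b _ _ h h' => absurd h' (not_lt_of_gt h)) h1 h2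

theorem aux_delete (k : ℕ) (π : Equiv.Perm (Fin (k + 1))) (π' : Equiv.Perm (Fin k)) :
    DeleteTop k π π' ↔
      ∀ i, (π ((π.symm (Fin.last k)).succAbove i) : ℕ) = (π' i : ℕ) := by
  unfold DeleteTop
  rw [List.filter_map]
  have : ((fun v : ℕ => v != k) ∘ fun i => (π i : ℕ)) =
      (fun i => decide (i ≠ π.symm (Fin.last k))) := by
    funext i
    have : (π i : ℕ) = k ↔ i = π.symm (Fin.last k) := by
      rw [Equiv.eq_symm_apply, Fin.ext_iff, Fin.val_last]
    by_cases h : (π i : ℕ) = k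
    · simp [this.1 h]
    · have h' : i ≠ π.symm (Fin.last k) := fun h' => h (this.2 h')
      simp [h, h']
  rw [this, aux_filter, List.map_map, List.map_inj_left]
  simp

theorem aux_exists (k : ℕ) (π : Equiv.Perm (Fin (k + 1))) : ∃ π', DeleteTop k π π' := by
  have hne : ∀ i, π ((π.symm (Fin.last k)).succAbove i) ≠ Fin.last k := by
    intro i h
    rw [← Equiv.eq_symm_apply] at h
    exact Fin.succAbove_ne _ _ h
  let f : Fin k → Fin k := fun i => (π ((π.symm (Fin.last k)).succAbove i)).castPred (hne i)
  have hf : Function.Injective f := by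
    intro i j h
    simpa [f] using h
  refine ⟨Equiv.ofBijective f (Finite.injective_iff_bijective.1 hf), ?_⟩
  rw [aux_delete]
  intro i
  simp [f]

/-- The position shift when deleting position `p`. -/
theorem aux_sa (k : ℕ) (p : Fin (k + 1)) (i : Fin k) :
    (p.succAbove i : ℕ) = if (i : ℕ) < p then (i : ℕ) else i + 1 := by
  simp only [Fin.succAbove, Fin.lt_def, Fin.val_castSucc]
  split <;> simp

theorem aux_eq (k : ℕ) (π τ : Equiv.Perm (Fin (k + 1))) (π' τ' : Equiv.Perm (Fin k))
    (h1 : DeleteTop k π π') (h2 : DeleteTop k τ τ') (i j : Fin k)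
    (h : π ((π.symm (Fin.last k)).succAbove i) = τ ((τ.symm (Fin.last k)).succAbove j)) :
    π' i = τ' j := by
  rw [aux_delete] at h1 h2
  rw [Fin.ext_iff, ← h1, ← h2, h]

theorem aux_prefix (k : ℕ) (π τ : Equiv.Perm (Fin (k + 1))) (π' τ' : Equiv.Perm (Fin k))
    (h1 : DeleteTop k π π') (h2 : DeleteTop k τ τ') (h : PrefixRev (k + 1) π τ) :
    PrefixRev k π' τ' := by
  obtain ⟨t, ht, ha, hb⟩ := h
  have key := aux_eq k π τ π' τ' h1 h2
  have hp : π (π.symm (Fin.last k)) = Fin.last k := by simp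
  generalize π.symm (Fin.last k) = p at key hp
  have hplt := p.isLt
  by_cases hpt : t ≤ (p : ℕ)
  · have hq : τ.symm (Fin.last k) = p := by
      rw [Equiv.symm_apply_eq, ← ha p hpt, hp]
    rw [hq] at key
    refine ⟨t, by omega, fun i hi => key _ _ (ha _ ?_), fun i hi => key _ _ ?_⟩
    · rw [aux_sa]; split <;> omega
    · rw [hb _ (by rw [aux_sa]; split <;> omega)]
      congr 1
      rw [Fin.ext_iff]
      simp only [aux_sa]
      split <;> split <;> omega
  · have hq : τ.symm (Fin.last k) = ⟨t - 1 - (p : ℕ), by omega⟩ := by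
      rw [Equiv.symm_apply_eq, ← hb p (by omega), hp]
    rw [hq] at key
    refine ⟨t - 1, by omega, fun i hi => key _ _ ?_, fun i hi => key _ _ ?_⟩
    · rw [ha _ (by rw [aux_sa]; split <;> omega)]
      congr 1
      rw [Fin.ext_iff]
      simp only [aux_sa]
      split <;> split <;> omega
    · rw [hb _ (by rw [aux_sa]; split <;> omega)]
      congr 1
      rw [Fin.ext_iff]
      simp only [aux_sa]
      split <;> split <;> omega

theorem aux_suffix (k : ℕ) (π τ : Equiv.Perm (Fin (k + 1))) (π' τ' : Equiv.Perm (Fin k))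
    (h1 : DeleteTop k π π') (h2 : DeleteTop k τ τ') (h : SuffixRev (k + 1) π τ) :
    SuffixRev k π' τ' := by
  obtain ⟨t, ha, hb⟩ := h
  have key := aux_eq k π τ π' τ' h1 h2
  have hp : π (π.symm (Fin.last k)) = Fin.last k := by simp
  generalize π.symm (Fin.last k) = p at key hp
  have hplt := p.isLt
  by_cases hpt : (p : ℕ) < t
  · have hq : τ.symm (Fin.last k) = p := by
      rw [Equiv.symm_apply_eq, ← ha p hpt, hp]
    rw [hq] at key
    refine ⟨t - 1, fun i hi => key _ _ (ha _ ?_), fun i hi => key _ _ ?_⟩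
    · rw [aux_sa]; split <;> omega
    · have := i.isLt
      rw [hb _ (by rw [aux_sa]; split <;> omega)]
      congr 1
      rw [Fin.ext_iff]
      simp only [aux_sa]
      split <;> split <;> omega
  · have hq : τ.symm (Fin.last k) = ⟨k + 1 - 1 - (p : ℕ) + t, by omega⟩ := by
      rw [Equiv.symm_apply_eq, ← hb p (by omega), hp]
    rw [hq] at key
    refine ⟨t, fun i hi => key _ _ ?_, fun i hi => key _ _ ?_⟩
    · rw [ha _ (by rw [aux_sa]; split <;> omega)]
      congr 1
      rw [Fin.ext_iff]
      simp only [aux_sa]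
      split <;> split <;> omega
    · have := i.isLt
      rw [hb _ (by rw [aux_sa]; split <;> omega)]
      congr 1
      rw [Fin.ext_iff]
      simp only [aux_sa]
      split <;> split <;> omega

theorem aux_adj (k : ℕ) (π τ : Equiv.Perm (Fin (k + 1))) (π' τ' : Equiv.Perm (Fin k))
    (h1 : DeleteTop k π π') (h2 : DeleteTop k τ τ')
    (h : (prefixSuffixGraph (k + 1)).Adj π τ) :
    π' = τ' ∨ (prefixSuffixGraph k).Adj π' τ' := by
  by_cases he : π' = τ'
  · exact Or.inl he
  · right
    rw [prefixSuffixGraph, SimpleGraph.fromRel_adj] at h ⊢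
    refine ⟨he, ?_⟩
    rcases h.2 with (h | h) | (h | h)
    · exact Or.inl (Or.inl (aux_prefix k π τ π' τ' h1 h2 h))
    · exact Or.inl (Or.inr (aux_suffix k π τ π' τ' h1 h2 h))
    · exact Or.inr (Or.inl (aux_prefix k τ π τ' π' h2 h1 h))
    · exact Or.inr (Or.inr (aux_suffix k τ π τ' π' h2 h1 h))

/-- The reversal of the first `t` positions. -/
def prefRev (n t : ℕ) (ht : t ≤ n) : Equiv.Perm (Fin n) :=
  Function.Involutive.toPerm
    (fun i => ⟨if (i : ℕ) < t then t - 1 - (i : ℕ) else i, by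
      have := i.isLt; split <;> omega⟩) (by
    intro i
    rw [Fin.ext_iff]
    simp only
    split_ifs <;> omega)

theorem prefRev_val (n t : ℕ) (ht : t ≤ n) (i : Fin n) :
    (prefRev n t ht i : ℕ) = if (i : ℕ) < t then t - 1 - (i : ℕ) else i := rfl

theorem aux_reach_rev (n t : ℕ) (ht : t ≤ n) (π : Equiv.Perm (Fin n)) :
    (prefixSuffixGraph n).Reachable π (π * prefRev n t ht) := by
  by_cases he : π = π * prefRev n t ht
  · rw [← he]
  · apply SimpleGraph.Adj.reachable
    rw [prefixSuffixGraph, SimpleGraph.fromRel_adj]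
    refine ⟨he, Or.inr (Or.inl ⟨t, ht, fun i hi => ?_, fun i hi => ?_⟩)⟩
    · rw [Equiv.Perm.mul_apply]
      congr 1
      rw [Fin.ext_iff, prefRev_val, if_neg (by omega)]
    · rw [Equiv.Perm.mul_apply]
      congr 1
      rw [Fin.ext_iff, prefRev_val, if_pos hi]

theorem aux_swap (n : ℕ) (i : Fin n) :
    Equiv.swap i.castSucc i.succ =
      prefRev (n + 1) (i + 2) (by omega) * prefRev (n + 1) 2 (by have := i.isLt; omega) *
        prefRev (n + 1) (i + 2) (by omega) := by
  ext j
  have hj := j.isLt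
  have hi := i.isLt
  simp only [Equiv.Perm.mul_apply, prefRev_val, Equiv.swap_apply_def, Fin.ext_iff,
    apply_ite Fin.val, Fin.val_castSucc, Fin.val_succ]
  split_ifs <;> omega

theorem aux_reach (n : ℕ) (π τ : Equiv.Perm (Fin (n + 1))) :
    (prefixSuffixGraph (n + 1)).Reachable π τ := by
  have key : ∀ g : Equiv.Perm (Fin (n + 1)), ∀ π,
      (prefixSuffixGraph (n + 1)).Reachable π (π * g) := by
    intro g
    have hg : g ∈ Submonoid.closure
        (Set.range fun i : Fin n => Equiv.swap i.castSucc i.succ) := by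
      rw [Equiv.Perm.mclosure_swap_castSucc_succ]; trivial
    induction hg using Submonoid.closure_induction with
    | mem x hx =>
      obtain ⟨i, rfl⟩ := hx
      intro π
      simp only
      rw [aux_swap, ← mul_assoc, ← mul_assoc]
      exact ((aux_reach_rev _ _ _ _).trans (aux_reach_rev _ _ _ _)).trans
        (aux_reach_rev _ _ _ _)
    | one => intro π; rw [mul_one]
    | mul x y _ _ hx hy =>
      intro π
      rw [← mul_assoc]
      exact (hx π).trans (hy _)
  have := key (π⁻¹ * τ) π
  rwa [mul_inv_cancel_left] at this

theorem aux_walk (k : ℕ) (π τ : Equiv.Perm (Fin (k + 1)))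
    (w : (prefixSuffixGraph (k + 1)).Walk π τ) :
    ∀ π' τ' : Equiv.Perm (Fin k), DeleteTop k π π' → DeleteTop k τ τ' →
      ∃ w' : (prefixSuffixGraph k).Walk π' τ', w'.length ≤ w.length := by
  induction w with
  | nil =>
    intro π' τ' h1 h2
    have : π' = τ' := Equiv.ext fun i => aux_eq k _ _ π' τ' h1 h2 i i rfl
    subst this
    exact ⟨SimpleGraph.Walk.nil, by simp⟩
  | cons h w ih =>
    rename_i u v x
    intro π' τ' h1 h2
    obtain ⟨v', hv⟩ := aux_exists k v
    obtain ⟨w', hw'⟩ := ih v' τ' hv h2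
    rcases aux_adj k u v π' v' h1 hv h with he | ha
    · subst he
      exact ⟨w', by rw [SimpleGraph.Walk.length_cons]; omega⟩
    · exact ⟨SimpleGraph.Walk.cons ha w', by simp only [SimpleGraph.Walk.length_cons]; omega⟩


/-- Let `ψ(π) ∈ S_k` be obtained from `π ∈ S_{k+1}` by deleting the
entry equal to `k + 1`. If `π, τ` are adjacent in `G_{k+1}` then `ψ(π) = ψ(τ)` or
`ψ(π), ψ(τ)` are adjacent in `G_k`; consequently
`d_{G_k}(ψ(π), ψ(τ)) ≤ d_{G_{k+1}}(π, τ)`. -/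
theorem statement_18 (k : ℕ) (hk : 1 ≤ k) :
    (∀ (π τ : Equiv.Perm (Fin (k + 1))) (π' τ' : Equiv.Perm (Fin k)),
      DeleteTop k π π' → DeleteTop k τ τ' →
      (prefixSuffixGraph (k + 1)).Adj π τ →
      π' = τ' ∨ (prefixSuffixGraph k).Adj π' τ') ∧
    (∀ (π τ : Equiv.Perm (Fin (k + 1))) (π' τ' : Equiv.Perm (Fin k)),
      DeleteTop k π π' → DeleteTop k τ τ' →
      (prefixSuffixGraph k).dist π' τ' ≤ (prefixSuffixGraph (k + 1)).dist π τ) := by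
  refine ⟨aux_adj k, fun π τ π' τ' h1 h2 => ?_⟩
  obtain ⟨w, hw⟩ := (aux_reach k π τ).exists_walk_length_eq_dist
  obtain ⟨w', hw'⟩ := aux_walk k π τ w π' τ' h1 h2
  rw [← hw]
  exact (SimpleGraph.dist_le w').trans hw'
end
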